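/- Let a_t = ‖x(t) − x*‖_v. Under Assumptions 1, 2 and 3, almost surely, for every t ≥ τ: a_{t+1} ≤ β̃_{τ−1,t} a_τ + γ · sup_{1≤i≤n} Σ_{k=τ}^{t} b_{k,t,i} a_k + ‖Σ_{k=τ}^{t} α_k B̃_{k,t} ε(k)‖_v + ‖Σ_{k=τ}^{t} α_k B̃_{k,t} φ(k)‖_v. -/

import Mathlib

/-!
The bound holds along every path on which all `D_t` have entries in `[0, 1]`, and entries at least
`σ` once `t ≥ τ`; almost every path is of this kind.

The sum `ε(t) + φ(t)` is exactly the difference between the update actually performed and its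
`D_t`-average. Hence the error `y_t = x(t) - x*` relaxes at the rates `A_t = α_t D_t`,
`y_{t+1} = (I - A_t) y_t + A_t (F(x(t)) - x*) + α_t (ε(t) + φ(t))`,
and variation of constants expresses `y_{t+1}` through `y_τ`, the contracted errors
`F(x(k)) - x*` and the perturbations. Since `A_t` is diagonal with entries in `[0, 1]`, all the
products of the matrices `I - A_t` are nonnegative diagonal matrices, so that the first two terms
can be bounded coordinate by coordinate.
-/

open MeasureTheory Finset

/-- Weighted infinity norm `‖x‖_v = max_i |x_i| / v_i`. -/
noncomputable def vnorm {n : ℕ} (v x : Fin n → ℝ) : ℝ := ⨆ i, |x i| / v i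

theorem eq_prod_smul_add_sum_of_affine_recursion {R M : Type*} [CommMonoid R] [AddCommMonoid M]
    [DistribMulAction R M] {y u : ℕ → M} {c : ℕ → R} {τ : ℕ}
    (h : ∀ t, τ ≤ t → y (t + 1) = c t • y t + u t) {t : ℕ} (ht : τ ≤ t) :
    y (t + 1) = (∏ ℓ ∈ Icc τ t, c ℓ) • y τ + ∑ k ∈ Icc τ t, (∏ ℓ ∈ Icc (k + 1) t, c ℓ) • u k := by
  induction t, ht using Nat.le_induction with
  | base => simp [h τ le_rfl]
  | succ t ht ih =>
    have hsum : c (t + 1) • ∑ k ∈ Icc τ t, (∏ ℓ ∈ Icc (k + 1) t, c ℓ) • u k =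
        ∑ k ∈ Icc τ t, (∏ ℓ ∈ Icc (k + 1) (t + 1), c ℓ) • u k := by
      rw [smul_sum]
      refine sum_congr rfl fun k hk ↦ ?_
      rw [prod_Icc_succ_top (by grind), mul_comm, mul_smul]
    rw [h (t + 1) (by lia), ih, smul_add, hsum, ← mul_smul, mul_comm, add_assoc,
      ← prod_Icc_succ_top (by lia), sum_Icc_succ_top (by lia)]
    simp

theorem condExp_ite_mem_Icc {Ω : Type*} {m m0 : MeasurableSpace Ω} {μ : Measure Ω}
    [IsFiniteMeasure μ] (hm : m ≤ m0) {p : Ω → Prop} [DecidablePred p]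
    (hp : MeasurableSet {ω | p ω}) :
    ∀ᵐ ω ∂μ, (μ[fun ω ↦ if p ω then (1 : ℝ) else 0 | m]) ω ∈ Set.Icc (0 : ℝ) 1 := by
  have hmem : ∀ ω, (if p ω then (1 : ℝ) else 0) ∈ Set.Icc (0 : ℝ) 1 := fun ω ↦ by
    split_ifs <;> simp
  have hmeas : Measurable fun ω ↦ if p ω then (1 : ℝ) else 0 :=
    Measurable.ite hp measurable_const measurable_const
  exact (convex_Icc 0 1).condExp_mem hm
    (.of_mem_Icc 0 1 hmeas.aemeasurable (.of_forall hmem)) isClosed_Icc (.of_forall hmem)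

section vnorm

variable {n : ℕ} {v : Fin n → ℝ}

theorem abs_div_le_vnorm (v x : Fin n → ℝ) (i : Fin n) : |x i| / v i ≤ vnorm v x :=
  le_ciSup (f := fun i ↦ |x i| / v i) (Set.finite_range _).bddAbove i

theorem vnorm_nonneg (hv : 0 ≤ v) (x : Fin n → ℝ) : 0 ≤ vnorm v x :=
  Real.iSup_nonneg fun i ↦ div_nonneg (abs_nonneg _) (hv i)

theorem vnorm_add_le (hv : 0 ≤ v) (x y : Fin n → ℝ) : vnorm v (x + y) ≤ vnorm v x + vnorm v y := by
  refine Real.iSup_le (fun i ↦ ?_) (add_nonneg (vnorm_nonneg hv x) (vnorm_nonneg hv y))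
  calc |(x + y) i| / v i ≤ |x i| / v i + |y i| / v i := by
        rw [← add_div]
        exact div_le_div_of_nonneg_right (abs_add_le _ _) (hv i)
    _ ≤ vnorm v x + vnorm v y := add_le_add (abs_div_le_vnorm v x i) (abs_div_le_vnorm v y i)

theorem vnorm_mul_le (hv : 0 ≤ v) {c : Fin n → ℝ} {K : ℝ} (hc : ∀ i, |c i| ≤ K)
    (x : Fin n → ℝ) : vnorm v (c * x) ≤ K * vnorm v x := by
  obtain _ | _ := isEmpty_or_nonempty (Fin n)
  · simp [vnorm]
  refine ciSup_le fun i ↦ ?_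
  rw [Pi.mul_apply, abs_mul, mul_div_assoc]
  exact mul_le_mul (hc i) (abs_div_le_vnorm v x i) (div_nonneg (abs_nonneg _) (hv i))
    ((abs_nonneg _).trans (hc i))

theorem vnorm_sum_mul_le {κ : Type*} (hv : 0 ≤ v) {s : Finset κ} {b y : κ → Fin n → ℝ}
    {a : κ → ℝ} (hb : ∀ k ∈ s, 0 ≤ b k) (hy : ∀ k ∈ s, vnorm v (y k) ≤ a k) :
    vnorm v (∑ k ∈ s, b k * y k) ≤ ⨆ i, ∑ k ∈ s, b k i * a k := by
  obtain _ | _ := isEmpty_or_nonempty (Fin n)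
  · simp [vnorm]
  refine ciSup_mono (Set.finite_range _).bddAbove fun i ↦ ?_
  calc |(∑ k ∈ s, b k * y k) i| / v i
      ≤ (∑ k ∈ s, |b k i * y k i|) / v i := by
        simp only [Finset.sum_apply, Pi.mul_apply]
        exact div_le_div_of_nonneg_right (abs_sum_le_sum_abs _ _) (hv i)
    _ = ∑ k ∈ s, b k i * (|y k i| / v i) := by
        rw [sum_div]
        refine sum_congr rfl fun k hk ↦ ?_
        rw [abs_mul, abs_of_nonneg (hb k hk i), mul_div_assoc]
    _ ≤ ∑ k ∈ s, b k i * a k := by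
        gcongr with k hk
        · exact hb k hk i
        · exact (abs_div_le_vnorm v (y k) i).trans (hy k hk)

theorem vnorm_le_of_relaxation {A y g ξ : ℕ → Fin n → ℝ} {ρ : ℕ → ℝ} {γ : ℝ} {τ : ℕ}
    (hv : 0 ≤ v) (hγ : 0 ≤ γ)
    (hA0 : ∀ t, τ ≤ t → 0 ≤ A t) (hA1 : ∀ t, τ ≤ t → A t ≤ 1)
    (hρA : ∀ t, τ ≤ t → ∀ i, ρ t ≤ A t i)
    (hg : ∀ t, τ ≤ t → vnorm v (g t) ≤ γ * vnorm v (y t))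
    (hrec : ∀ t, τ ≤ t → y (t + 1) = (1 - A t) * y t + A t * g t + ξ t) {t : ℕ} (ht : τ ≤ t) :
    vnorm v (y (t + 1)) ≤
      (∏ ℓ ∈ Icc τ t, (1 - ρ ℓ)) * vnorm v (y τ) +
      γ * (⨆ i, ∑ k ∈ Icc τ t, (A k * ∏ ℓ ∈ Icc (k + 1) t, (1 - A ℓ)) i * vnorm v (y k)) +
      vnorm v (∑ k ∈ Icc τ t, (∏ ℓ ∈ Icc (k + 1) t, (1 - A ℓ)) * ξ k) := by
  have hsplit : y (t + 1) = (∏ ℓ ∈ Icc τ t, (1 - A ℓ)) * y τ +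
      ∑ k ∈ Icc τ t, (A k * ∏ ℓ ∈ Icc (k + 1) t, (1 - A ℓ)) * g k +
      ∑ k ∈ Icc τ t, (∏ ℓ ∈ Icc (k + 1) t, (1 - A ℓ)) * ξ k := by
    have hrec' : ∀ t, τ ≤ t → y (t + 1) = (1 - A t) • y t + (A t * g t + ξ t) := fun t ht ↦ by
      rw [hrec t ht, smul_eq_mul, add_assoc]
    rw [eq_prod_smul_add_sum_of_affine_recursion hrec' ht, add_assoc, ← sum_add_distrib,
      smul_eq_mul]
    exact congrArg _ (sum_congr rfl fun k _ ↦ by rw [smul_eq_mul]; ring)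
  have hinitial : vnorm v ((∏ ℓ ∈ Icc τ t, (1 - A ℓ)) * y τ) ≤
      (∏ ℓ ∈ Icc τ t, (1 - ρ ℓ)) * vnorm v (y τ) := by
    refine vnorm_mul_le hv (fun i ↦ ?_) _
    rw [prod_apply, abs_prod]
    refine prod_le_prod (fun _ _ ↦ abs_nonneg _) fun ℓ hℓ ↦ ?_
    have hτℓ := (mem_Icc.mp hℓ).1
    have hAℓ : A ℓ i ≤ 1 := hA1 ℓ hτℓ i
    calc |(1 - A ℓ) i| = 1 - A ℓ i := abs_of_nonneg (sub_nonneg.mpr hAℓ)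
      _ ≤ 1 - ρ ℓ := sub_le_sub_left (hρA ℓ hτℓ i) 1
  have hweight : ∀ k ∈ Icc τ t, 0 ≤ A k * ∏ ℓ ∈ Icc (k + 1) t, (1 - A ℓ) := fun k hk ↦
    mul_nonneg (hA0 k (mem_Icc.mp hk).1)
      (prod_nonneg fun ℓ hℓ ↦ sub_nonneg.mpr (hA1 ℓ (by grind)))
  have hdrift : vnorm v (∑ k ∈ Icc τ t, (A k * ∏ ℓ ∈ Icc (k + 1) t, (1 - A ℓ)) * g k) ≤
      γ * (⨆ i, ∑ k ∈ Icc τ t, (A k * ∏ ℓ ∈ Icc (k + 1) t, (1 - A ℓ)) i * vnorm v (y k)) := by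
    refine (vnorm_sum_mul_le hv hweight fun k hk ↦ hg k (mem_Icc.mp hk).1).trans_eq ?_
    simp only [Real.mul_iSup_of_nonneg hγ, mul_sum, mul_left_comm]
  rw [hsplit]
  exact (vnorm_add_le hv _ _).trans <| by grw [vnorm_add_le hv, hinitial, hdrift]

end vnorm

theorem SA_error_decomposition_general
    {Ω : Type*} {m0 : MeasurableSpace Ω} (μ : Measure Ω) [IsFiniteMeasure μ]
    (ℱ : Filtration ℕ m0) {n : ℕ} {v : Fin n → ℝ} (hv : ∀ i, 0 < v i)
    {F : (Fin n → ℝ) → (Fin n → ℝ)} {γ : ℝ} (hγ : 0 ≤ γ) {xstar : Fin n → ℝ}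
    (hcontr : ∀ x, vnorm v (F x - xstar) ≤ γ * vnorm v (x - xstar))
    {idx : ℕ → Ω → Fin n} (hidx : ∀ t, Measurable (idx t)) {w : ℕ → Ω → ℝ}
    {α : ℕ → ℝ} (hα : ∀ t, α t ∈ Set.Icc (0 : ℝ) 1) {X : ℕ → Ω → Fin n → ℝ}
    (hupd : ∀ t ω i, X (t + 1) ω i =
      if i = idx t ω then X t ω i + α t * (F (X t ω) i - X t ω i + w t ω) else X t ω i)
    {sg : ℝ} {τ : ℕ} {d : ℕ → Fin n → Ω → ℝ}
    (hd : ∀ t i, d t i = μ[(fun ω ↦ if idx t ω = i then (1 : ℝ) else 0) | ℱ (t - τ)])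
    (hexpl : ∀ (i : Fin n) (t : ℕ), τ ≤ t → ∀ᵐ ω ∂μ, sg ≤ d t i ω)
    {eps : ℕ → Ω → Fin n → ℝ}
    (heps : ∀ t ω i, eps t ω i =
      ((if idx t ω = i then (1 : ℝ) else 0) - d t i ω) *
          (F (X (t - τ) ω) i - X (t - τ) ω i) +
        (if idx t ω = i then w t ω else 0))
    {phi : ℕ → Ω → Fin n → ℝ}
    (hphi : ∀ t ω i, phi t ω i =
      ((if idx t ω = i then (1 : ℝ) else 0) - d t i ω) *
        (F (X t ω) i - F (X (t - τ) ω) i - (X t ω i - X (t - τ) ω i))) :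
    ∀ᵐ ω ∂μ, ∀ t, τ ≤ t →
      vnorm v (X (t + 1) ω - xstar) ≤
        (∏ ℓ ∈ Icc τ t, (1 - sg * α ℓ)) * vnorm v (X τ ω - xstar) +
        γ * (⨆ i, ∑ k ∈ Icc τ t,
          (α k * d k i ω * ∏ ℓ ∈ Icc (k + 1) t, (1 - α ℓ * d ℓ i ω)) *
            vnorm v (X k ω - xstar)) +
        vnorm v (fun i ↦ ∑ k ∈ Icc τ t,
          α k * ((∏ ℓ ∈ Icc (k + 1) t, (1 - α ℓ * d ℓ i ω)) * eps k ω i)) +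
        vnorm v (fun i ↦ ∑ k ∈ Icc τ t,
          α k * ((∏ ℓ ∈ Icc (k + 1) t, (1 - α ℓ * d ℓ i ω)) * phi k ω i)) := by
  have hd01 : ∀ᵐ ω ∂μ, ∀ t i, d t i ω ∈ Set.Icc (0 : ℝ) 1 := by
    simp only [ae_all_iff, hd]
    exact fun t i ↦ condExp_ite_mem_Icc (ℱ.le _) (hidx t (measurableSet_singleton i))
  have hsg : ∀ᵐ ω ∂μ, ∀ i t, τ ≤ t → sg ≤ d t i ω := by simpa only [ae_all_iff] using hexpl
  filter_upwards [hd01, hsg] with ω hd01 hsg t ht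
  let A : ℕ → Fin n → ℝ := fun t i ↦ α t * d t i ω
  have hrec : ∀ t, τ ≤ t → X (t + 1) ω - xstar = (1 - A t) * (X t ω - xstar) +
      A t * (F (X t ω) - xstar) + α t • (eps t ω + phi t ω) := fun t _ ↦ by
    ext i
    simp only [A, Pi.sub_apply, Pi.add_apply, Pi.mul_apply, Pi.smul_apply, Pi.one_apply,
      smul_eq_mul, hupd, heps, hphi, eq_comm (a := i)]
    split_ifs <;> ring
  have hbound := vnorm_le_of_relaxation (fun i ↦ (hv i).le) hγ
    (fun t _ i ↦ mul_nonneg (hα t).1 (hd01 t i).1)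
    (fun t _ i ↦ mul_le_one₀ (hα t).2 (hd01 t i).1 (hd01 t i).2)
    (fun t ht i ↦ (mul_comm sg (α t)).trans_le (mul_le_mul_of_nonneg_left (hsg i t ht) (hα t).1))
    (fun t _ ↦ hcontr (X t ω)) hrec ht
  simp only [smul_add, mul_add, sum_add_distrib] at hbound
  have hsum : ∀ u : ℕ → Fin n → ℝ,
      ∑ k ∈ Icc τ t, (∏ ℓ ∈ Icc (k + 1) t, (1 - A ℓ)) * α k • u k = fun i ↦
        ∑ k ∈ Icc τ t, α k * ((∏ ℓ ∈ Icc (k + 1) t, (1 - α ℓ * d ℓ i ω)) * u k i) := fun u ↦ by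
    ext i
    simp [A]
  grw [vnorm_add_le fun i ↦ (hv i).le, hsum, hsum, ← add_assoc] at hbound
  simpa [A] using hbound

/-- **Lemma 1 (error decomposition).** Under Assumptions 1, 2 and 3, with
`a_t = ‖x(t) - x*‖_v`, almost surely, for every `t ≥ τ`:
`a_{t+1} ≤ β̃_{τ-1,t} a_τ + γ sup_i Σ_{k=τ}^t b_{k,t,i} a_k
  + ‖Σ_{k=τ}^t α_k B̃_{k,t} ε(k)‖_v + ‖Σ_{k=τ}^t α_k B̃_{k,t} φ(k)‖_v`,
where `b_{k,t,i} = α_k d_{k,i} ∏_{ℓ=k+1}^t (1-α_ℓ d_{ℓ,i})`,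
`B̃_{k,t} = ∏_{ℓ=k+1}^t (I-α_ℓ D_ℓ)` and `β̃_{τ-1,t} = ∏_{ℓ=τ}^t (1-σα_ℓ)`. -/
theorem SA_error_decomposition
    {Ω : Type*} {m0 : MeasurableSpace Ω} (μ : Measure Ω) [IsProbabilityMeasure μ]
    (ℱ : Filtration ℕ m0)
    (n : ℕ) (hn : 0 < n) (v : Fin n → ℝ) (hv : ∀ i, 0 < v i)
    -- Assumption 1 (contraction)
    (F : (Fin n → ℝ) → (Fin n → ℝ)) (γ C : ℝ) (hγ0 : 0 < γ) (hγ1 : γ < 1) (hC : 0 < C)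
    (hcontr : ∀ x y, vnorm v (F x - F y) ≤ γ * vnorm v (x - y))
    (hFbd : ∀ x, vnorm v (F x) ≤ γ * vnorm v x + C)
    (xstar : Fin n → ℝ) (hfix : F xstar = xstar)
    -- the asynchronous SA scheme
    (idx : ℕ → Ω → Fin n) (hidx : ∀ t, Measurable[ℱ t] (idx t))
    (w : ℕ → Ω → ℝ) (wbar : ℝ)
    (α : ℕ → ℝ) (hα : ∀ t, α t ∈ Set.Ioc (0 : ℝ) 1)
    (X : ℕ → Ω → Fin n → ℝ) (hX0 : ∀ ω, X 0 ω = 0)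
    (hupd : ∀ t ω i, X (t + 1) ω i =
      if i = idx t ω then X t ω i + α t * (F (X t ω) i - X t ω i + w t ω) else X t ω i)
    -- Assumption 2 (martingale difference noise)
    (hw_meas : ∀ t, Measurable[ℱ (t + 1)] (w t))
    (hw_mean : ∀ t, μ[w t | ℱ t] =ᵐ[μ] 0)
    (hw_bd : ∀ t, ∀ᵐ ω ∂μ, |w t ω| ≤ wbar)
    -- Assumption 3 (sufficient exploration), with `d_{t,i} = P(i_t = i | ℱ_{t-τ})`
    (sg : ℝ) (τ : ℕ) (hsg0 : 0 < sg) (hsg1 : sg < 1) (hτ : 0 < τ)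
    (d : ℕ → Fin n → Ω → ℝ)
    (hd : ∀ t i, d t i = μ[(fun ω => if idx t ω = i then (1 : ℝ) else 0) | ℱ (t - τ)])
    (hexpl : ∀ (i : Fin n) (t : ℕ), τ ≤ t → ∀ᵐ ω ∂μ, sg ≤ d t i ω)
    -- the noise vector `ε(t)`
    (eps : ℕ → Ω → Fin n → ℝ)
    (heps : ∀ t ω i, eps t ω i =
      ((if idx t ω = i then (1 : ℝ) else 0) - d t i ω) *
          (F (X (t - τ) ω) i - X (t - τ) ω i) +
        (if idx t ω = i then w t ω else 0))
    -- the drift vector `φ(t)`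
    (phi : ℕ → Ω → Fin n → ℝ)
    (hphi : ∀ t ω i, phi t ω i =
      ((if idx t ω = i then (1 : ℝ) else 0) - d t i ω) *
        (F (X t ω) i - F (X (t - τ) ω) i - (X t ω i - X (t - τ) ω i))) :
    ∀ᵐ ω ∂μ, ∀ t, τ ≤ t →
      vnorm v (X (t + 1) ω - xstar) ≤
        (∏ ℓ ∈ Finset.Icc τ t, (1 - sg * α ℓ)) * vnorm v (X τ ω - xstar) +
        γ * (⨆ i, ∑ k ∈ Finset.Icc τ t,
          (α k * d k i ω * ∏ ℓ ∈ Finset.Icc (k + 1) t, (1 - α ℓ * d ℓ i ω)) *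
            vnorm v (X k ω - xstar)) +
        vnorm v (fun i => ∑ k ∈ Finset.Icc τ t,
          α k * ((∏ ℓ ∈ Finset.Icc (k + 1) t, (1 - α ℓ * d ℓ i ω)) * eps k ω i)) +
        vnorm v (fun i => ∑ k ∈ Finset.Icc τ t,
          α k * ((∏ ℓ ∈ Finset.Icc (k + 1) t, (1 - α ℓ * d ℓ i ω)) * phi k ω i)) := by
  exact SA_error_decomposition_general μ ℱ hv hγ0.le
    (fun x ↦ by simpa only [hfix] using hcontr x xstar) (fun t ↦ (hidx t).mono (ℱ.le t) le_rfl)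
    (fun t ↦ Set.Ioc_subset_Icc_self (hα t)) hupd hd hexpl heps hphi
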